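/- arXiv:2604.28108 — 3 statements merged into one kernel-verified Lean document; each statement's English description precedes it below -/
import Mathlib

section
/- Let M ∈ ℝ^{n×n} be symmetric positive definite, A ∈ ℝ^{n×n}, B ∈ ℝ^{n×m}, K ∈ ℝ^{m×n}, a₁ > 0 with (A + BK)ᵀM + M(A + BK) ⪯ −a₁ M, and r̄ ≥ 0. Let e : [t₀, ∞) → ℝⁿ be differentiable with e'(t) = (A + BK) e(t) + w(t) for all t ≥ t₀, where w : [t₀, ∞) → ℝⁿ is continuous and ‖M^{1/2} w(t)‖ ≤ r̄ for all t ≥ t₀. Then for all t ≥ t₀, √(e(t)ᵀ M e(t)) ≤ e^{−(a₁/2)(t−t₀)} √(e(t₀)ᵀ M e(t₀)) + (1 − e^{−(a₁/2)(t−t₀)}) · (2 r̄ / a₁). -/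
open Matrix Set
open scoped MatrixOrder

/-- The Euclidean norm of a vector in `Fin k → ℝ`. -/
noncomputable def euclNorm {k : ℕ} (v : Fin k → ℝ) : ℝ :=
  ‖(WithLp.equiv 2 (Fin k → ℝ)).symm v‖

/-- Cauchy–Schwarz for the bilinear form of a positive semidefinite matrix, expressed through its
square root. -/
theorem dotProduct_mulVec_le_sqrt_mul_euclNorm {n : ℕ} {M : Matrix (Fin n) (Fin n) ℝ}
    (hM : M.PosSemidef) (x y : Fin n → ℝ) :
    x ⬝ᵥ M *ᵥ y ≤ Real.sqrt (x ⬝ᵥ M *ᵥ x) * euclNorm (CFC.sqrt M *ᵥ y) := by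
  have hS : (CFC.sqrt M)ᵀ = CFC.sqrt M := by
    have h := (Matrix.nonneg_iff_posSemidef.mp (CFC.sqrt_nonneg M)).isHermitian
    rwa [Matrix.IsHermitian, Matrix.conjTranspose_eq_transpose_of_trivial] at h
  have hSS : CFC.sqrt M * CFC.sqrt M = M :=
    CFC.sqrt_mul_sqrt_self M (Matrix.nonneg_iff_posSemidef.mpr hM)
  have hform (z : Fin n → ℝ) :
      x ⬝ᵥ M *ᵥ z =
        inner ℝ (WithLp.toLp 2 (CFC.sqrt M *ᵥ x)) (WithLp.toLp 2 (CFC.sqrt M *ᵥ z)) := by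
    rw [EuclideanSpace.inner_toLp_toLp, star_trivial,
      Matrix.dotProduct_mulVec (CFC.sqrt M *ᵥ z), ← Matrix.mulVec_transpose, hS,
      Matrix.mulVec_mulVec, hSS, dotProduct_comm]
  rw [hform y, hform x, real_inner_self_eq_norm_sq, Real.sqrt_sq (norm_nonneg _)]
  exact real_inner_le_norm _ _

/-- Comparison principle: if `q ≥ 0` satisfies `q' ≤ -2cq + 2r√q`, then `√q` is bounded by the
solution of `v' = -cv + r`. -/
theorem sqrt_le_of_hasDerivWithinAt_le {q q' : ℝ → ℝ} {c r t₀ : ℝ} (hc : 0 < c) (hr : 0 ≤ r)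
    (hq : ∀ t ∈ Ici t₀, 0 ≤ q t)
    (hd : ∀ t ∈ Ici t₀, HasDerivWithinAt q (q' t) (Ici t₀) t)
    (hle : ∀ t ∈ Ici t₀, q' t ≤ -2 * c * q t + 2 * r * Real.sqrt (q t)) :
    ∀ t ∈ Ici t₀, Real.sqrt (q t) ≤
      Real.exp (-c * (t - t₀)) * Real.sqrt (q t₀) + (1 - Real.exp (-c * (t - t₀))) * (r / c) := by
  intro t ht
  -- Regularize the square root, which need not be differentiable where `q` vanishes.
  have key (ε : ℝ) (hε : 0 < ε) : Real.sqrt (q t) ≤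
      Real.exp (-c * (t - t₀)) * Real.sqrt (q t₀ + ε ^ 2) +
        (1 - Real.exp (-c * (t - t₀))) * (r / c + ε) := by
    have hdg : ∀ s ∈ Ici t₀, HasDerivWithinAt
        (fun s => Real.exp (c * (s - t₀)) * (Real.sqrt (q s + ε ^ 2) - (r / c + ε)))
        (Real.exp (c * (s - t₀)) * (c * 1) * (Real.sqrt (q s + ε ^ 2) - (r / c + ε)) +
          Real.exp (c * (s - t₀)) * (q' s / (2 * Real.sqrt (q s + ε ^ 2)))) (Ici t₀) s := by
      intro s hs
      have hpos : q s + ε ^ 2 ≠ 0 := (add_pos_of_nonneg_of_pos (hq s hs) (by positivity)).ne'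
      exact ((((hasDerivWithinAt_id s _).sub_const t₀).const_mul c).exp).mul
        ((((hd s hs).add_const _).sqrt hpos).sub_const _)
    have hanti : AntitoneOn
        (fun s => Real.exp (c * (s - t₀)) * (Real.sqrt (q s + ε ^ 2) - (r / c + ε)))
        (Ici t₀) := by
      refine antitoneOn_of_hasDerivWithinAt_nonpos (convex_Ici t₀)
        (fun s hs => (hdg s hs).continuousWithinAt)
        (fun s hs => (hdg s (interior_subset hs)).mono interior_subset) ?_
      intro s hs
      have hs := interior_subset hs
      have hqs := hq s hs
      have hε2 : 0 < ε ^ 2 := by positivity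
      set u := Real.sqrt (q s + ε ^ 2) with hu
      have hupos : 0 < u := Real.sqrt_pos.mpr (by linarith)
      have husq : u ^ 2 = q s + ε ^ 2 := Real.sq_sqrt (by linarith)
      have hεu : ε ≤ u := Real.le_sqrt_of_sq_le (by linarith)
      have hqu : Real.sqrt (q s) ≤ u := Real.sqrt_le_sqrt (by linarith)
      have hdu : q' s / (2 * u) ≤ -c * (u - (r / c + ε)) := by
        have hrc : -c * (u - (r / c + ε)) = -c * u + r + c * ε := by field_simp; ring
        rw [hrc, div_le_iff₀ (by positivity)]
        have h₁ := mul_le_mul_of_nonneg_left hqu hr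
        have h₂ := mul_le_mul_of_nonneg_left (mul_le_mul_of_nonneg_left hεu hε.le) hc.le
        have h₃ : c * u ^ 2 = c * q s + c * ε ^ 2 := by rw [husq]; ring
        nlinarith [hle s hs]
      have := mul_le_mul_of_nonneg_left hdu (Real.exp_pos (c * (s - t₀))).le
      linarith
    have h := hanti self_mem_Ici ht ht
    simp only [sub_self, mul_zero, Real.exp_zero, one_mul] at h
    have h' := mul_le_mul_of_nonneg_left h (Real.exp_pos (-c * (t - t₀))).le
    rw [← mul_assoc, ← Real.exp_add, show -c * (t - t₀) + c * (t - t₀) = 0 by ring,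
      Real.exp_zero, one_mul] at h'
    have hmono : Real.sqrt (q t) ≤ Real.sqrt (q t + ε ^ 2) :=
      Real.sqrt_le_sqrt (by linarith [sq_nonneg ε])
    linarith
  have hlim : Filter.Tendsto (fun ε : ℝ => Real.exp (-c * (t - t₀)) * Real.sqrt (q t₀ + ε ^ 2) +
      (1 - Real.exp (-c * (t - t₀))) * (r / c + ε)) (nhdsWithin 0 (Ioi 0))
      (nhds (Real.exp (-c * (t - t₀)) * Real.sqrt (q t₀) +
        (1 - Real.exp (-c * (t - t₀))) * (r / c))) := by
    refine tendsto_nhdsWithin_of_tendsto_nhds (Continuous.tendsto' (by fun_prop) _ _ ?_)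
    simp
  exact ge_of_tendsto hlim (Filter.eventually_of_mem self_mem_nhdsWithin key)

/-- Derivative of a quadratic form with symmetric matrix along a curve. -/
theorem HasDerivWithinAt.dotProduct_mulVec_self {n : ℕ} {M : Matrix (Fin n) (Fin n) ℝ}
    (hM : Mᵀ = M) {e : ℝ → Fin n → ℝ} {e' : Fin n → ℝ} {s : Set ℝ} {t : ℝ}
    (he : HasDerivWithinAt e e' s t) :
    HasDerivWithinAt (fun t => e t ⬝ᵥ M *ᵥ e t) (2 * (e t ⬝ᵥ M *ᵥ e')) s t := by
  have hcoord := hasDerivWithinAt_pi.mp he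
  have hMe (i : Fin n) : HasDerivWithinAt (fun t => (M *ᵥ e t) i) ((M *ᵥ e') i) s t := by
    simp only [Matrix.mulVec, dotProduct]
    exact HasDerivWithinAt.fun_sum fun j _ => (hcoord j).const_mul (M i j)
  have h : HasDerivWithinAt (fun t => e t ⬝ᵥ M *ᵥ e t)
      (∑ i, (e' i * (M *ᵥ e t) i + e t i * (M *ᵥ e') i)) s t :=
    HasDerivWithinAt.fun_sum fun i _ => (hcoord i).mul (hMe i)
  convert h using 1
  have hsymm : e' ⬝ᵥ M *ᵥ e t = e t ⬝ᵥ M *ᵥ e' := by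
    rw [Matrix.dotProduct_mulVec, ← Matrix.mulVec_transpose, hM, dotProduct_comm]
  rw [Finset.sum_add_distrib, two_mul]
  exact congrArg (· + e t ⬝ᵥ M *ᵥ e') hsymm.symm

/-- Simulation-function bound along perturbed closed-loop error
dynamics: if `M ≻ 0` symmetric, `(A+BK)ᵀM + M(A+BK) ⪯ −a₁M`, and
`e'(t) = (A+BK)e(t) + w(t)` on `[t₀,∞)` with `w` continuous and
`‖M^{1/2} w(t)‖ ≤ r̄`, then for all `t ≥ t₀`,
`√(e(t)ᵀMe(t)) ≤ e^{−(a₁/2)(t−t₀)} √(e(t₀)ᵀMe(t₀)) + (1 − e^{−(a₁/2)(t−t₀)})(2r̄/a₁)`. -/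
theorem simulation_function_comparison {n m : ℕ}
    (M : Matrix (Fin n) (Fin n) ℝ) (hM : M.PosDef)
    (A : Matrix (Fin n) (Fin n) ℝ) (B : Matrix (Fin n) (Fin m) ℝ)
    (K : Matrix (Fin m) (Fin n) ℝ) (a₁ : ℝ) (ha₁ : 0 < a₁)
    (hLyap : ((-a₁) • M - ((A + B * K)ᵀ * M + M * (A + B * K))).PosSemidef)
    (r : ℝ) (hr : 0 ≤ r) (t₀ : ℝ)
    (e w : ℝ → Fin n → ℝ)
    (hde : ∀ t ∈ Ici t₀, HasDerivWithinAt e ((A + B * K).mulVec (e t) + w t) (Ici t₀) t)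
    (hw : ContinuousOn w (Ici t₀))
    (hwb : ∀ t ∈ Ici t₀, euclNorm ((CFC.sqrt M).mulVec (w t)) ≤ r) :
    ∀ t ∈ Ici t₀,
      Real.sqrt (e t ⬝ᵥ M.mulVec (e t)) ≤
        Real.exp (-(a₁ / 2) * (t - t₀)) * Real.sqrt (e t₀ ⬝ᵥ M.mulVec (e t₀)) +
          (1 - Real.exp (-(a₁ / 2) * (t - t₀))) * (2 * r / a₁) := by
  have hMt : Mᵀ = M := by
    have h := hM.isHermitian
    rwa [Matrix.IsHermitian, Matrix.conjTranspose_eq_transpose_of_trivial] at h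
  have hdissip (x : Fin n → ℝ) :
      2 * (x ⬝ᵥ M *ᵥ ((A + B * K) *ᵥ x)) ≤ -a₁ * (x ⬝ᵥ M *ᵥ x) := by
    have h := hLyap.dotProduct_mulVec_nonneg x
    have hsymm : x ⬝ᵥ ((A + B * K)ᵀ * M) *ᵥ x = x ⬝ᵥ (M * (A + B * K)) *ᵥ x := by
      rw [Matrix.dotProduct_mulVec, ← Matrix.mulVec_transpose, Matrix.transpose_mul, hMt,
        Matrix.transpose_transpose, dotProduct_comm]
    rw [star_trivial, Matrix.sub_mulVec, Matrix.add_mulVec, Matrix.smul_mulVec, dotProduct_sub,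
      dotProduct_add, dotProduct_smul, hsymm, ← Matrix.mulVec_mulVec, smul_eq_mul] at h
    linarith
  have hrate : 2 * r / a₁ = r / (a₁ / 2) := by field_simp
  rw [hrate]
  refine sqrt_le_of_hasDerivWithinAt_le (q := fun t => e t ⬝ᵥ M *ᵥ e t) (half_pos ha₁) hr
    (fun t _ => by simpa using hM.posSemidef.dotProduct_mulVec_nonneg (e t))
    (fun t ht => (hde t ht).dotProduct_mulVec_self hMt) ?_
  intro t ht
  have hcs := (dotProduct_mulVec_le_sqrt_mul_euclNorm hM.posSemidef (e t) (w t)).trans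
    (mul_le_mul_of_nonneg_left (hwb t ht) (Real.sqrt_nonneg _))
  rw [Matrix.mulVec_add, dotProduct_add]
  linarith [hdissip (e t)]
end

section
/- Consider matrices A ∈ ℝ^{n×n}, B ∈ ℝ^{n×m}, C ∈ ℝ^{p×n}, Â ∈ ℝ^{n_r×n_r}, B̂ ∈ ℝ^{n_r×m_r}, Ĉ ∈ ℝ^{p×n_r}, P ∈ ℝ^{n×n_r}, S ∈ ℝ^{n×m_r}, K ∈ ℝ^{m×n}, Q ∈ ℝ^{m×n_r}, R ∈ ℝ^{m×m_r}, a symmetric positive definite M ∈ ℝ^{n×n}, and constants a₁ > 0, ε ≥ 0, r̄_max ≥ 0. Assume: CP = Ĉ; CS = 0; CᵀC ⪯ M; (A + BK)ᵀM + M(A + BK) ⪯ −a₁ M; and 2 r̄_max / a₁ ≤ ε. Let x : [t₀,∞) → ℝⁿ and x̂ : [t₀,∞) → ℝ^{n_r} be differentiable and û : [t₀,∞) → ℝ^{m_r} be continuously differentiable, satisfying for all t ≥ t₀: x'(t) = A x(t) + B (K e(t) + Q x̂(t) + R û(t)) with e(t) = x(t) − P x̂(t) − S û(t), x̂'(t)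 = Â x̂(t) + B̂ û(t), and ‖M^{1/2} ((AP − PÂ + BQ) x̂(t) + (AS + BR − PB̂) û(t) − S û'(t))‖ ≤ r̄_max. If e(t₀)ᵀ M e(t₀) ≤ ε², then ‖C x(t) − Ĉ x̂(t)‖ ≤ ε for all t ≥ t₀. -/
open Matrix Set

theorem euclNorm_sq {k : ℕ} (v : Fin k → ℝ) : euclNorm v ^ 2 = v ⬝ᵥ v := by
  rw [euclNorm, EuclideanSpace.real_norm_sq_eq]
  exact Finset.sum_congr rfl fun i _ => sq (v i)

theorem euclNorm_nonneg {k : ℕ} (v : Fin k → ℝ) : 0 ≤ euclNorm v :=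
  norm_nonneg _

theorem HasDerivWithinAt.matrix_mulVec {k l : ℕ} (N : Matrix (Fin k) (Fin l) ℝ)
    {f : ℝ → Fin l → ℝ} {f' : Fin l → ℝ} {s : Set ℝ} {t : ℝ} (hf : HasDerivWithinAt f f' s t) :
    HasDerivWithinAt (fun τ => N *ᵥ f τ) (N *ᵥ f') s t :=
  (LinearMap.toContinuousLinearMap N.mulVecLin).hasFDerivAt.comp_hasDerivWithinAt t hf

theorem HasDerivWithinAt.dotProduct {k : ℕ} {f g : ℝ → Fin k → ℝ} {f' g' : Fin k → ℝ}
    {s : Set ℝ} {t : ℝ} (hf : HasDerivWithinAt f f' s t) (hg : HasDerivWithinAt g g' s t) :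
    HasDerivWithinAt (fun τ => f τ ⬝ᵥ g τ) (f' ⬝ᵥ g t + f t ⬝ᵥ g') s t := by
  simp only [_root_.dotProduct, ← Finset.sum_add_distrib]
  exact HasDerivWithinAt.fun_sum fun i _ =>
    (hasDerivWithinAt_pi.mp hf i).mul (hasDerivWithinAt_pi.mp hg i)

open scoped MatrixOrder in
/-- The quadratic form of `M` is the standard inner product after applying `M^{1/2}`. -/
theorem dotProduct_sqrt_mulVec {k : ℕ} {M : Matrix (Fin k) (Fin k) ℝ} (hM : M.PosSemidef)
    (v w : Fin k → ℝ) : (CFC.sqrt M *ᵥ v) ⬝ᵥ (CFC.sqrt M *ᵥ w) = v ⬝ᵥ M *ᵥ w := by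
  have hsymm : (CFC.sqrt M)ᵀ = CFC.sqrt M := by
    simpa [IsHermitian] using (nonneg_iff_posSemidef.mp (CFC.sqrt_nonneg M)).isHermitian
  have hsq : CFC.sqrt M * CFC.sqrt M = M := CFC.sqrt_mul_sqrt_self M hM.nonneg
  conv_rhs => rw [← hsq, ← mulVec_mulVec, dotProduct_mulVec, ← mulVec_transpose, hsymm]

/-- A differential Grönwall inequality: if `V' ≤ -c (V - b)` then the sublevel set `V ≤ b`
is forward invariant. -/
theorem le_of_hasDerivWithinAt_le_neg_mul_sub {V V' : ℝ → ℝ} {c b t₀ : ℝ}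
    (hV : ∀ t ∈ Ici t₀, HasDerivWithinAt V (V' t) (Ici t₀) t)
    (hV' : ∀ t ∈ Ici t₀, V' t ≤ -c * (V t - b)) (h₀ : V t₀ ≤ b) :
    ∀ t ∈ Ici t₀, V t ≤ b := by
  intro t ht
  have hderiv : ∀ τ ∈ Ici t₀, HasDerivWithinAt (fun τ => Real.exp (c * τ) * (V τ - b))
      (Real.exp (c * τ) * c * (V τ - b) + Real.exp (c * τ) * V' τ) (Ici t₀) τ := by
    intro τ hτ
    have hlin : HasDerivAt (fun τ : ℝ => c * τ) c τ := by
      simpa using (hasDerivAt_id τ).const_mul c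
    exact hlin.exp.hasDerivWithinAt.mul ((hV τ hτ).sub_const b)
  have hanti := antitoneOn_of_hasDerivWithinAt_nonpos (convex_Ici t₀)
    (fun τ hτ => (hderiv τ hτ).continuousWithinAt)
    (fun τ hτ => (hderiv τ (interior_subset hτ)).mono interior_subset)
    (fun τ hτ => by
      nlinarith [hV' τ (interior_subset hτ), Real.exp_pos (c * τ)])
  have hle := hanti self_mem_Ici ht ht
  have hnonpos : Real.exp (c * t₀) * (V t₀ - b) ≤ 0 :=
    mul_nonpos_of_nonneg_of_nonpos (Real.exp_pos _).le (by linarith)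
  have := nonpos_of_mul_nonpos_right (hle.trans hnonpos) (Real.exp_pos (c * t))
  linarith

open scoped MatrixOrder in
/-- Lyapunov decay of the quadratic form of `M` along `e' = F e + d`, with Young's inequality
applied to the disturbance term. -/
theorem lyapunov_deriv_le {k : ℕ} {M F : Matrix (Fin k) (Fin k) ℝ} (hM : M.PosSemidef)
    {a ε r : ℝ} (ha : 0 < a) (hr : 0 ≤ r) (hrε : 2 * r / a ≤ ε)
    (hF : ((-a) • M - (Fᵀ * M + M * F)).PosSemidef) (v d : Fin k → ℝ)
    (hd : euclNorm (CFC.sqrt M *ᵥ d) ≤ r) :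
    (F *ᵥ v + d) ⬝ᵥ M *ᵥ v + v ⬝ᵥ M *ᵥ (F *ᵥ v + d) ≤
      -(a / 2) * (v ⬝ᵥ M *ᵥ v - ε ^ 2) := by
  have hquad := hF.dotProduct_mulVec_nonneg v
  have hFM : v ⬝ᵥ Fᵀ *ᵥ M *ᵥ v = (F *ᵥ v) ⬝ᵥ M *ᵥ v := by
    rw [dotProduct_mulVec, vecMul_transpose]
  simp only [star_trivial, sub_mulVec, add_mulVec, smul_mulVec, dotProduct_sub, dotProduct_add,
    dotProduct_smul, smul_eq_mul, ← mulVec_mulVec, hFM] at hquad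
  have hcomm : d ⬝ᵥ M *ᵥ v = v ⬝ᵥ M *ᵥ d := by
    rw [← dotProduct_sqrt_mulVec hM, dotProduct_comm, dotProduct_sqrt_mulVec hM]
  have hdd : d ⬝ᵥ M *ᵥ d ≤ r ^ 2 := by
    rw [← dotProduct_sqrt_mulVec hM, ← euclNorm_sq]
    exact pow_le_pow_left₀ (euclNorm_nonneg _) hd 2
  have hyoung := hM.dotProduct_mulVec_nonneg (a • v - (2 : ℝ) • d)
  simp only [star_trivial, mulVec_sub, mulVec_smul, dotProduct_sub, sub_dotProduct,
    dotProduct_smul, smul_dotProduct, smul_eq_mul, hcomm] at hyoung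
  have hra : (2 * r) ^ 2 ≤ (ε * a) ^ 2 :=
    pow_le_pow_left₀ (by positivity) ((div_le_iff₀ ha).mp hrε) 2
  simp only [add_dotProduct, mulVec_add, dotProduct_add, hcomm]
  have hcross : 4 * (v ⬝ᵥ M *ᵥ d) ≤ a * (v ⬝ᵥ M *ᵥ v) + a * ε ^ 2 := by
    refine le_of_mul_le_mul_left ?_ ha
    nlinarith
  linarith

/-- Core quantitative content of Theorem 2: under the structural
conditions `CP = Chat`, `CS = 0`, `CᵀC ⪯ M`, the Lyapunov inequality
`(A+BK)ᵀM + M(A+BK) ⪯ −a₁M`, and `2 r̄max / a₁ ≤ ε`, if the interconnected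
dynamics hold with residual bounded by `r̄max` and the initial error satisfies
`e(t₀)ᵀ M e(t₀) ≤ ε²`, then `‖C x(t) − Chat xhat(t)‖ ≤ ε` for all `t ≥ t₀`. -/
theorem hierarchical_output_bound {n m p nr mr : ℕ}
    (A : Matrix (Fin n) (Fin n) ℝ) (B : Matrix (Fin n) (Fin m) ℝ)
    (C : Matrix (Fin p) (Fin n) ℝ)
    (Ahat : Matrix (Fin nr) (Fin nr) ℝ) (Bhat : Matrix (Fin nr) (Fin mr) ℝ)
    (Chat : Matrix (Fin p) (Fin nr) ℝ)
    (P : Matrix (Fin n) (Fin nr) ℝ) (S : Matrix (Fin n) (Fin mr) ℝ)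
    (K : Matrix (Fin m) (Fin n) ℝ) (Q : Matrix (Fin m) (Fin nr) ℝ)
    (R : Matrix (Fin m) (Fin mr) ℝ)
    (M : Matrix (Fin n) (Fin n) ℝ) (hM : M.PosDef)
    (a₁ ε rmax : ℝ) (ha₁ : 0 < a₁) (hε : 0 ≤ ε) (hrmax : 0 ≤ rmax)
    (hCP : C * P = Chat) (hCS : C * S = 0)
    (hCM : (M - Cᵀ * C).PosSemidef)
    (hLyap : ((-a₁) • M - ((A + B * K)ᵀ * M + M * (A + B * K))).PosSemidef)
    (hrε : 2 * rmax / a₁ ≤ ε)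
    (t₀ : ℝ)
    (x : ℝ → Fin n → ℝ) (xhat : ℝ → Fin nr → ℝ) (uhat uhat' : ℝ → Fin mr → ℝ)
    (e : ℝ → Fin n → ℝ)
    (he : ∀ t, e t = x t - P.mulVec (xhat t) - S.mulVec (uhat t))
    (hx : ∀ t ∈ Ici t₀, HasDerivWithinAt x
      (A.mulVec (x t) + B.mulVec (K.mulVec (e t) + Q.mulVec (xhat t) + R.mulVec (uhat t)))
      (Ici t₀) t)
    (hxhat : ∀ t ∈ Ici t₀, HasDerivWithinAt xhat
      (Ahat.mulVec (xhat t) + Bhat.mulVec (uhat t)) (Ici t₀) t)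
    (huhat : ∀ t ∈ Ici t₀, HasDerivWithinAt uhat (uhat' t) (Ici t₀) t)
    (huhat' : ContinuousOn uhat' (Ici t₀))
    (hres : ∀ t ∈ Ici t₀,
      euclNorm ((open scoped MatrixOrder in CFC.sqrt M).mulVec
        ((A * P - P * Ahat + B * Q).mulVec (xhat t) +
          (A * S + B * R - P * Bhat).mulVec (uhat t) - S.mulVec (uhat' t))) ≤ rmax)
    (hinit : e t₀ ⬝ᵥ M.mulVec (e t₀) ≤ ε ^ 2) :
    ∀ t ∈ Ici t₀, euclNorm (C.mulVec (x t) - Chat.mulVec (xhat t)) ≤ ε := by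
  intro t ht
  have hinv : e t ⬝ᵥ M *ᵥ e t ≤ ε ^ 2 := by
    have hderiv : ∀ τ ∈ Ici t₀, HasDerivWithinAt e ((A + B * K) *ᵥ e τ +
        ((A * P - P * Ahat + B * Q) *ᵥ xhat τ + (A * S + B * R - P * Bhat) *ᵥ uhat τ -
          S *ᵥ uhat' τ)) (Ici t₀) τ := by
      intro τ hτ
      have h := ((hx τ hτ).sub ((hxhat τ hτ).matrix_mulVec P)).sub ((huhat τ hτ).matrix_mulVec S)
      have hxe : x τ = e τ + P *ᵥ xhat τ + S *ᵥ uhat τ := by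
        rw [he τ]
        abel
      refine (h.congr_deriv ?_).congr_of_mem (fun σ _ => he σ) hτ
      rw [hxe]
      simp only [add_mulVec, sub_mulVec, mulVec_add, ← mulVec_mulVec]
      abel
    exact le_of_hasDerivWithinAt_le_neg_mul_sub
      (fun τ hτ => (hderiv τ hτ).dotProduct ((hderiv τ hτ).matrix_mulVec M))
      (fun τ hτ => lyapunov_deriv_le hM.posSemidef ha₁ hrmax hrε hLyap (e τ) _ (hres τ hτ))
      hinit t ht
  have hout : C *ᵥ x t - Chat *ᵥ xhat t = C *ᵥ e t := by
    rw [he t]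
    simp [mulVec_sub, hCP, hCS]
  have hC := hCM.dotProduct_mulVec_nonneg (e t)
  rw [star_trivial, sub_mulVec, dotProduct_sub, ← mulVec_mulVec, dotProduct_mulVec _ Cᵀ,
    vecMul_transpose, ← euclNorm_sq] at hC
  rw [hout]
  exact le_of_sq_le_sq (by linarith) hε
end

section
/- Let M ∈ ℝ^{n×n} be symmetric positive definite, A ∈ ℝ^{n×n}, B ∈ ℝ^{n×m}, K ∈ ℝ^{m×n}, S ∈ ℝ^{n×m_r}, a₁ > 0 with (A + BK)ᵀM + M(A + BK) ⪯ −a₁ M, r̄ ≥ 0, ε ≥ 0 with 2r̄/a₁ ≤ ε, and t₀ < τ. Let e : [t₀, ∞) → ℝⁿ be differentiable on [t₀, τ) and on (τ, ∞) with e'(t) = (A + BK)e(t) + w(t) there, where w is continuous on these intervals and ‖M^{1/2} w(t)‖ ≤ r̄ for all t; suppose e is left-continuous at τ with left limit e(τ⁻), right-continuous with right limit e(τ⁺), and e(τ⁺) = e(τ⁻) − S δ for some δ ∈ ℝ^{m_r}. Define β(τ) = e^{−(a₁/2)(τ−t₀)} √(e(t₀)ᵀMe(t₀)) + (1 − e^{−(a₁/2)(τ−t₀)})·(2r̄/a₁).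 If √(e(t₀)ᵀMe(t₀)) ≤ ε, β(τ) ≤ ε, and δᵀ Sᵀ M S δ ≤ (ε − β(τ))², then √(e(t)ᵀMe(t)) ≤ ε for all t ≥ t₀ at which e is defined by its one-sided limits (in particular √(e(τ⁺)ᵀMe(τ⁺)) ≤ ε and √(e(t)ᵀMe(t)) ≤ ε for all t > τ). -/
open Matrix Set Filter
open scoped MatrixOrder

/-- Scalar comparison principle: if `q ≥ 0` satisfies `q' ≤ -a q + 2 r √q`, then `√q` is bounded by
the solution of `v' = -(a / 2) v + r` with the same initial value. -/
theorem sqrt_le_of_deriv_le {a r s t : ℝ} (ha : 0 < a) (hst : s ≤ t) (hr : 0 ≤ r)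
    {q q' : ℝ → ℝ} (hq : ∀ x, 0 ≤ q x) (hcont : ContinuousOn q (Icc s t))
    (hderiv : ∀ x ∈ Ioo s t, HasDerivAt q (q' x) x)
    (hle : ∀ x ∈ Ioo s t, q' x ≤ -a * q x + 2 * r * √(q x)) :
    √(q t) ≤ Real.exp (-(a / 2) * (t - s)) * √(q s) +
      (1 - Real.exp (-(a / 2) * (t - s))) * (2 * r / a) := by
  -- `√q` need not be differentiable at zeros of `q`, so first bound `√(q + η ^ 2)` for `η > 0`.
  have key : ∀ η : ℝ, 0 < η → √(q t + η ^ 2) ≤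
      Real.exp (-(a / 2) * (t - s)) * √(q s + η ^ 2) +
        (1 - Real.exp (-(a / 2) * (t - s))) * (2 * r / a + η) := by
    intro η hη
    have hpos : ∀ x, 0 < q x + η ^ 2 := fun x => by have := hq x; positivity
    have hder : ∀ x ∈ Ioo s t,
        HasDerivAt (fun y => Real.exp (a / 2 * y) * (√(q y + η ^ 2) - (2 * r / a + η)))
          (Real.exp (a / 2 * x) * (a / 2) * (√(q x + η ^ 2) - (2 * r / a + η)) +
            Real.exp (a / 2 * x) * (q' x / (2 * √(q x + η ^ 2)))) x := by
      intro x hx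
      have h1 : HasDerivAt (fun y => Real.exp (a / 2 * y)) (Real.exp (a / 2 * x) * (a / 2)) x := by
        simpa using ((hasDerivAt_id x).const_mul (a / 2)).exp
      exact h1.mul ((((hderiv x hx).add_const (η ^ 2)).sqrt (hpos x).ne').sub_const _)
    have hanti : AntitoneOn
        (fun y => Real.exp (a / 2 * y) * (√(q y + η ^ 2) - (2 * r / a + η))) (Icc s t) := by
      refine antitoneOn_of_deriv_nonpos (convex_Icc s t) ?_ ?_ ?_
      · fun_prop
      · rw [interior_Icc]
        exact fun x hx => (hder x hx).differentiableAt.differentiableWithinAt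
      · rw [interior_Icc]
        intro x hx
        rw [(hder x hx).deriv]
        have hW : 0 < √(q x + η ^ 2) := Real.sqrt_pos.2 (hpos x)
        have hWsq : √(q x + η ^ 2) ^ 2 = q x + η ^ 2 := Real.sq_sqrt (hpos x).le
        have hηW : η ≤ √(q x + η ^ 2) := Real.le_sqrt_of_sq_le (by linarith [hq x])
        have hqW : √(q x) ≤ √(q x + η ^ 2) := Real.sqrt_le_sqrt (by nlinarith)
        have hbound : q' x / (2 * √(q x + η ^ 2)) ≤
            -(a / 2) * (√(q x + η ^ 2) - (2 * r / a + η)) := by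
          rw [div_le_iff₀ (by positivity)]
          have hcancel : a / 2 * (2 * r / a) = r := by field_simp
          have h1 := hle x hx
          have h2 := mul_le_mul_of_nonneg_left hqW hr
          have h3 := mul_le_mul_of_nonneg_left hηW (mul_pos ha hη).le
          calc q' x ≤ -a * (√(q x + η ^ 2) ^ 2 - η ^ 2) + 2 * r * √(q x + η ^ 2) := by
                rw [hWsq]; linarith
            _ ≤ -a * √(q x + η ^ 2) ^ 2 + a * η * √(q x + η ^ 2) +
                  2 * (a / 2 * (2 * r / a)) * √(q x + η ^ 2) := by rw [hcancel]; linarith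
            _ = _ := by ring
        have := mul_le_mul_of_nonneg_left hbound (Real.exp_pos (a / 2 * x)).le
        linarith
    have h := hanti (left_mem_Icc.2 hst) (right_mem_Icc.2 hst) hst
    have hexp : Real.exp (-(a / 2) * (t - s)) * Real.exp (a / 2 * t) = Real.exp (a / 2 * s) := by
      rw [← Real.exp_add]; congr 1; ring
    simp only [← hexp] at h
    rw [mul_comm (Real.exp (-(a / 2) * (t - s))), mul_assoc] at h
    have := le_of_mul_le_mul_left h (Real.exp_pos _)
    linarith
  have hl : Tendsto (fun η : ℝ => √(q t + η ^ 2)) (nhdsWithin 0 (Ioi 0)) (nhds √(q t)) := by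
    have : Continuous fun η : ℝ => √(q t + η ^ 2) := by fun_prop
    simpa using (this.tendsto 0).mono_left nhdsWithin_le_nhds
  have hrt : Tendsto (fun η : ℝ => Real.exp (-(a / 2) * (t - s)) * √(q s + η ^ 2) +
        (1 - Real.exp (-(a / 2) * (t - s))) * (2 * r / a + η)) (nhdsWithin 0 (Ioi 0))
      (nhds (Real.exp (-(a / 2) * (t - s)) * √(q s) +
        (1 - Real.exp (-(a / 2) * (t - s))) * (2 * r / a))) := by
    have : Continuous fun η : ℝ => Real.exp (-(a / 2) * (t - s)) * √(q s + η ^ 2) +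
        (1 - Real.exp (-(a / 2) * (t - s))) * (2 * r / a + η) := by fun_prop
    simpa using (this.tendsto 0).mono_left nhdsWithin_le_nhds
  exact le_of_tendsto_of_tendsto hl hrt (eventually_mem_nhdsWithin.mono fun η hη => key η hη)

/-- The bilinear form of `M` is the Euclidean inner product after applying `M^{1/2}`. -/
theorem dotProduct_mulVec_eq_inner_sqrt {n : ℕ} {M : Matrix (Fin n) (Fin n) ℝ} (hM : M.PosSemidef)
    (u v : Fin n → ℝ) :
    u ⬝ᵥ M.mulVec v =
      inner ℝ ((WithLp.equiv 2 (Fin n → ℝ)).symm ((CFC.sqrt M).mulVec u))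
        ((WithLp.equiv 2 (Fin n → ℝ)).symm ((CFC.sqrt M).mulVec v)) := by
  have hsq : CFC.sqrt M * CFC.sqrt M = M := CFC.sqrt_mul_sqrt_self M hM.nonneg
  have hsymm : (CFC.sqrt M)ᵀ = CFC.sqrt M := by
    simpa using (Matrix.nonneg_iff_posSemidef.1 (CFC.sqrt_nonneg M)).isHermitian.eq
  have : inner ℝ ((WithLp.equiv 2 (Fin n → ℝ)).symm ((CFC.sqrt M).mulVec u))
        ((WithLp.equiv 2 (Fin n → ℝ)).symm ((CFC.sqrt M).mulVec v)) =
      (CFC.sqrt M).mulVec u ⬝ᵥ (CFC.sqrt M).mulVec v := by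
    simp [PiLp.inner_apply, dotProduct, mul_comm]
  rw [this]
  conv_lhs => rw [← hsq]
  rw [← Matrix.mulVec_mulVec, Matrix.dotProduct_mulVec, ← Matrix.mulVec_transpose, hsymm]

theorem sqrt_dotProduct_mulVec_self {n : ℕ} {M : Matrix (Fin n) (Fin n) ℝ} (hM : M.PosSemidef)
    (v : Fin n → ℝ) :
    √(v ⬝ᵥ M.mulVec v) = euclNorm ((CFC.sqrt M).mulVec v) := by
  rw [dotProduct_mulVec_eq_inner_sqrt hM, real_inner_self_eq_norm_sq,
    Real.sqrt_sq (norm_nonneg _), euclNorm]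

theorem sqrt_dotProduct_mulVec_sub_le {n : ℕ} {M : Matrix (Fin n) (Fin n) ℝ} (hM : M.PosSemidef)
    (u v : Fin n → ℝ) :
    √((u - v) ⬝ᵥ M.mulVec (u - v)) ≤ √(u ⬝ᵥ M.mulVec u) + √(v ⬝ᵥ M.mulVec v) := by
  simp only [sqrt_dotProduct_mulVec_self hM]
  rw [Matrix.mulVec_sub]
  exact norm_sub_le (WithLp.toLp 2 ((CFC.sqrt M).mulVec u)) (WithLp.toLp 2 ((CFC.sqrt M).mulVec v))

theorem dotProduct_mulVec_le_mul_sqrt {n : ℕ} {M : Matrix (Fin n) (Fin n) ℝ} (hM : M.PosSemidef)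
    (u v : Fin n → ℝ) :
    u ⬝ᵥ M.mulVec v ≤ euclNorm ((CFC.sqrt M).mulVec u) * √(v ⬝ᵥ M.mulVec v) := by
  rw [sqrt_dotProduct_mulVec_self hM, dotProduct_mulVec_eq_inner_sqrt hM]
  exact real_inner_le_norm _ _

theorem dotProduct_mulVec_comm_of_isSymm {n : ℕ} {M : Matrix (Fin n) (Fin n) ℝ} (hM : M.IsSymm)
    (u v : Fin n → ℝ) : u ⬝ᵥ M.mulVec v = v ⬝ᵥ M.mulVec u := by
  rw [Matrix.dotProduct_mulVec, ← Matrix.mulVec_transpose, hM.eq, dotProduct_comm]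

theorem continuous_dotProduct_mulVec_self {n : ℕ} (M : Matrix (Fin n) (Fin n) ℝ) :
    Continuous fun v : Fin n → ℝ => v ⬝ᵥ M.mulVec v :=
  continuous_id.dotProduct (continuous_const.matrix_mulVec continuous_id)

theorem hasDerivAt_dotProduct_mulVec_self {n : ℕ} {M : Matrix (Fin n) (Fin n) ℝ} (hM : M.IsSymm)
    {e : ℝ → Fin n → ℝ} {v : Fin n → ℝ} {t : ℝ} (he : HasDerivAt e v t) :
    HasDerivAt (fun x => e x ⬝ᵥ M.mulVec (e x)) (2 * (v ⬝ᵥ M.mulVec (e t))) t := by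
  have hMe : HasDerivAt (fun x => M.mulVec (e x)) (M.mulVec v) t :=
    (LinearMap.toContinuousLinearMap M.mulVecLin).hasFDerivAt.comp_hasDerivAt t he
  have hsum : HasDerivAt (fun x => ∑ i, e x i * M.mulVec (e x) i)
      (∑ i, (v i * M.mulVec (e t) i + e t i * M.mulVec v i)) t :=
    HasDerivAt.fun_sum fun i _ => (hasDerivAt_pi.1 he i).mul (hasDerivAt_pi.1 hMe i)
  refine hsum.congr_deriv ?_
  rw [Finset.sum_add_distrib, two_mul]
  exact congrArg _ (dotProduct_mulVec_comm_of_isSymm hM (e t) v)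

/-- The Lyapunov inequality bounds the derivative of the quadratic form of `M` along
`e' = L e + w`. -/
theorem two_mul_dotProduct_mulVec_le {n : ℕ} {M L : Matrix (Fin n) (Fin n) ℝ} (hM : M.PosSemidef)
    {a r : ℝ} (hLyap : ((-a) • M - (Lᵀ * M + M * L)).PosSemidef) {u w : Fin n → ℝ}
    (hw : euclNorm ((CFC.sqrt M).mulVec w) ≤ r) :
    2 * ((L.mulVec u + w) ⬝ᵥ M.mulVec u) ≤
      -a * (u ⬝ᵥ M.mulVec u) + 2 * r * √(u ⬝ᵥ M.mulVec u) := by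
  have hsymm : M.IsSymm := by simpa [Matrix.IsSymm] using hM.isHermitian.eq
  have h1 := hLyap.dotProduct_mulVec_nonneg u
  have h2 : u ⬝ᵥ (Lᵀ * M).mulVec u = L.mulVec u ⬝ᵥ M.mulVec u := by
    rw [← Matrix.mulVec_mulVec, Matrix.dotProduct_mulVec, Matrix.vecMul_transpose]
  have h3 : u ⬝ᵥ (M * L).mulVec u = L.mulVec u ⬝ᵥ M.mulVec u := by
    rw [← Matrix.mulVec_mulVec, dotProduct_mulVec_comm_of_isSymm hsymm]
  rw [star_trivial, Matrix.sub_mulVec, Matrix.add_mulVec, Matrix.smul_mulVec, dotProduct_sub,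
    dotProduct_add, dotProduct_smul, h2, h3, smul_eq_mul] at h1
  have h4 := (dotProduct_mulVec_le_mul_sqrt hM w u).trans
    (mul_le_mul_of_nonneg_right hw (Real.sqrt_nonneg _))
  rw [add_dotProduct]
  linarith

/-- Comparison bound for `√(eᵀ M e)` along `e' = L e + w` on an interval without jumps. -/
theorem sqrt_dotProduct_mulVec_le_of_hasDerivAt {n : ℕ} {M L : Matrix (Fin n) (Fin n) ℝ}
    (hM : M.PosSemidef) {a r s t : ℝ} (ha : 0 < a) (hr : 0 ≤ r) (hst : s ≤ t)
    (hLyap : ((-a) • M - (Lᵀ * M + M * L)).PosSemidef) {e w : ℝ → Fin n → ℝ}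
    (hcont : ContinuousOn e (Icc s t))
    (hderiv : ∀ x ∈ Ioo s t, HasDerivAt e (L.mulVec (e x) + w x) x)
    (hw : ∀ x, euclNorm ((CFC.sqrt M).mulVec (w x)) ≤ r) :
    √(e t ⬝ᵥ M.mulVec (e t)) ≤ Real.exp (-(a / 2) * (t - s)) * √(e s ⬝ᵥ M.mulVec (e s)) +
      (1 - Real.exp (-(a / 2) * (t - s))) * (2 * r / a) := by
  have hsymm : M.IsSymm := by simpa [Matrix.IsSymm] using hM.isHermitian.eq
  exact sqrt_le_of_deriv_le (q := fun x => e x ⬝ᵥ M.mulVec (e x)) ha hst hr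
    (fun x => by simpa using hM.dotProduct_mulVec_nonneg (e x))
    ((continuous_dotProduct_mulVec_self M).comp_continuousOn hcont)
    (fun x hx => hasDerivAt_dotProduct_mulVec_self hsymm (hderiv x hx))
    (fun x _ => two_mul_dotProduct_mulVec_le hM hLyap (hw x))

theorem exp_convex_combination_le {a s t v c ε : ℝ} (ha : 0 < a) (hst : s ≤ t) (hv : v ≤ ε)
    (hc : c ≤ ε) :
    Real.exp (-(a / 2) * (t - s)) * v + (1 - Real.exp (-(a / 2) * (t - s))) * c ≤ ε := by
  have h1 : Real.exp (-(a / 2) * (t - s)) ≤ 1 := Real.exp_le_one_iff.2 (by nlinarith)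
  nlinarith [Real.exp_pos (-(a / 2) * (t - s)),
    mul_le_mul_of_nonneg_left hv (Real.exp_pos (-(a / 2) * (t - s))).le,
    mul_le_mul_of_nonneg_left hc (sub_nonneg.2 h1)]

/-- Corollary 1 (jump case): the error trajectory `e` obeys the
perturbed closed-loop dynamics on `[t₀, τ)` and on `(τ, ∞)`, has a left limit `eL`
at the jump time `τ`, is right-continuous at `τ`, and jumps by `−Sδ`, i.e.
`e(τ⁺) = e(τ⁻) − Sδ`. If `V(t₀) = √(e(t₀)ᵀMe(t₀)) ≤ ε`, the comparison bound
`β(τ) ≤ ε`, and the jump satisfies `δᵀSᵀMSδ ≤ (ε − β(τ))²`, then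
`√(e(t)ᵀMe(t)) ≤ ε` for all `t ≥ t₀` (at `t = τ` the value of `e` is its right
limit `e(τ⁺)`, so in particular `√(e(τ⁺)ᵀMe(τ⁺)) ≤ ε` and the bound holds for all
`t > τ`). -/
theorem jump_invariance {n m mr : ℕ}
    (M : Matrix (Fin n) (Fin n) ℝ) (hM : M.PosDef)
    (A : Matrix (Fin n) (Fin n) ℝ) (B : Matrix (Fin n) (Fin m) ℝ)
    (K : Matrix (Fin m) (Fin n) ℝ) (S : Matrix (Fin n) (Fin mr) ℝ)
    (a₁ r ε : ℝ) (ha₁ : 0 < a₁) (hr : 0 ≤ r) (hε : 0 ≤ ε)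
    (hLyap : ((-a₁) • M - ((A + B * K)ᵀ * M + M * (A + B * K))).PosSemidef)
    (hrε : 2 * r / a₁ ≤ ε)
    (t₀ τ : ℝ) (hτ : t₀ < τ)
    (e w : ℝ → Fin n → ℝ) (δ : Fin mr → ℝ) (eL : Fin n → ℝ)
    -- perturbed closed-loop dynamics on `[t₀, τ)` and on `(τ, ∞)`
    (hde₁ : ∀ t ∈ Ico t₀ τ,
      HasDerivWithinAt e ((A + B * K).mulVec (e t) + w t) (Ico t₀ τ) t)
    (hde₂ : ∀ t ∈ Ioi τ, HasDerivAt e ((A + B * K).mulVec (e t) + w t) t)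
    (hw₁ : ContinuousOn w (Ico t₀ τ)) (hw₂ : ContinuousOn w (Ioi τ))
    (hwb : ∀ t, euclNorm ((CFC.sqrt M).mulVec (w t)) ≤ r)
    -- left limit `e(τ⁻) = eL`, right-continuity (`e τ` is the right limit `e(τ⁺)`),
    -- and jump `e(τ⁺) = e(τ⁻) − Sδ`
    (hleft : Tendsto e (nhdsWithin τ (Iio τ)) (nhds eL))
    (hright : ContinuousWithinAt e (Ioi τ) τ)
    (hjump : e τ = eL - S.mulVec δ)
    -- comparison bound at the jump time
    (β : ℝ)
    (hβ : β = Real.exp (-(a₁ / 2) * (τ - t₀)) * Real.sqrt (e t₀ ⬝ᵥ M.mulVec (e t₀)) +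
      (1 - Real.exp (-(a₁ / 2) * (τ - t₀))) * (2 * r / a₁))
    (hV₀ : Real.sqrt (e t₀ ⬝ᵥ M.mulVec (e t₀)) ≤ ε)
    (hβε : β ≤ ε)
    (hδ : δ ⬝ᵥ (Sᵀ * M * S).mulVec δ ≤ (ε - β) ^ 2) :
    ∀ t ∈ Ici t₀, Real.sqrt (e t ⬝ᵥ M.mulVec (e t)) ≤ ε := by
  have hMs := hM.posSemidef
  have before : ∀ t ∈ Ico t₀ τ, √(e t ⬝ᵥ M.mulVec (e t)) ≤
      Real.exp (-(a₁ / 2) * (t - t₀)) * √(e t₀ ⬝ᵥ M.mulVec (e t₀)) +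
        (1 - Real.exp (-(a₁ / 2) * (t - t₀))) * (2 * r / a₁) := fun t ht =>
    sqrt_dotProduct_mulVec_le_of_hasDerivAt hMs ha₁ hr ht.1 hLyap
      (fun x hx => (hde₁ x ⟨hx.1, hx.2.trans_lt ht.2⟩).continuousWithinAt.mono
        (Icc_subset_Ico_right ht.2))
      (fun x hx => (hde₁ x ⟨hx.1.le, hx.2.trans ht.2⟩).hasDerivAt
        (Ico_mem_nhds hx.1 (hx.2.trans ht.2))) hwb
  have hL : √(eL ⬝ᵥ M.mulVec eL) ≤ β := by
    have hV : Tendsto (fun t => √(e t ⬝ᵥ M.mulVec (e t))) (nhdsWithin τ (Iio τ))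
        (nhds √(eL ⬝ᵥ M.mulVec eL)) :=
      ((continuous_dotProduct_mulVec_self M).sqrt.tendsto eL).comp hleft
    have hbd : Continuous fun t : ℝ =>
        Real.exp (-(a₁ / 2) * (t - t₀)) * √(e t₀ ⬝ᵥ M.mulVec (e t₀)) +
          (1 - Real.exp (-(a₁ / 2) * (t - t₀))) * (2 * r / a₁) := by fun_prop
    rw [hβ]
    exact le_of_tendsto_of_tendsto hV ((hbd.tendsto τ).mono_left nhdsWithin_le_nhds)
      (Filter.mem_of_superset (Ico_mem_nhdsLT hτ) before)
  have hτV : √(e τ ⬝ᵥ M.mulVec (e τ)) ≤ ε := by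
    have hS : √(S.mulVec δ ⬝ᵥ M.mulVec (S.mulVec δ)) ≤ ε - β := by
      refine Real.sqrt_le_iff.2 ⟨sub_nonneg.2 hβε, le_of_eq_of_le ?_ hδ⟩
      rw [← Matrix.mulVec_mulVec, ← Matrix.mulVec_mulVec, Matrix.dotProduct_mulVec δ,
        Matrix.vecMul_transpose]
    rw [hjump]
    linarith [sqrt_dotProduct_mulVec_sub_le hMs eL (S.mulVec δ)]
  intro t ht
  rcases lt_or_ge t τ with h | h
  · exact (before t ⟨ht, h⟩).trans (exp_convex_combination_le ha₁ ht hV₀ hrε)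
  · refine (sqrt_dotProduct_mulVec_le_of_hasDerivAt hMs ha₁ hr h hLyap (fun x hx => ?_)
      (fun x hx => hde₂ x hx.1) hwb).trans (exp_convex_combination_le ha₁ h hτV hrε)
    rcases hx.1.eq_or_lt with rfl | hlt
    · exact (continuousWithinAt_Ioi_iff_Ici.1 hright).mono Icc_subset_Ici_self
    · exact (hde₂ x hlt).continuousAt.continuousWithinAt
end
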